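/- Let r ∈ ℕ. The integral ∫_{[0,∞)^r} a_r(t)·e^{−a_r(t)}/(1 − e^{−a_r(t)}) dt converges, and for s > 0 the Riemann-sum bounds ∫_{[s,∞)^r} a_r(t)e^{−a_r(t)}/(1−e^{−a_r(t)}) dt ≤ Σ_{k ∈ ℕ^r} a_r(s·k)e^{−a_r(s·k)}/(1−e^{−a_r(s·k)})·s^r ≤ ∫_{[0,∞)^r} a_r(t)e^{−a_r(t)}/(1−e^{−a_r(t)}) dt hold; moreover the difference between the sum and the full integral is O_r(s^{1/r}). -/

import Mathlib

open Finset MeasureTheory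

/-- `h_r(y) = ∏_{1 ≤ ℓ ≤ j ≤ r} (y_ℓ + ⋯ + y_j)`. -/
noncomputable def hpoly (r : ℕ) (y : Fin r → ℝ) : ℝ :=
  ∏ p ∈ Finset.univ.filter (fun p : Fin r × Fin r => p.1 ≤ p.2),
    ∑ i ∈ Finset.Icc p.1 p.2, y i

/-- `c_r = r!(r-1)!⋯1!`. -/
def crconst (r : ℕ) : ℕ := ∏ i ∈ Finset.range r, Nat.factorial (i + 1)

/-- The Weyl dimension polynomial `a_r(k) = h_r(k)/c_r`. -/
noncomputable def apoly (r : ℕ) (y : Fin r → ℝ) : ℝ := hpoly r y / crconst r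

/-- `F(u) = u e^{-u}/(1 - e^{-u})`. -/
noncomputable def Ffun (u : ℝ) : ℝ := u * Real.exp (-u) / (1 - Real.exp (-u))

/-- The Riemann-sum term `F(a_r(s·k)) s^r` for `k ∈ ℕ^r`. -/
noncomputable def sumTerm (r : ℕ) (s : ℝ) (k : {k : Fin r → ℕ // ∀ i, 0 < k i}) : ℝ :=
  Ffun (apoly r (fun i => s * (k.1 i : ℝ))) * s ^ r

lemma Ffun_nonneg (u : ℝ) : 0 ≤ Ffun u := by
  unfold Ffun
  have := Real.exp_pos (-u)
  rcases le_total 0 u with h | h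
  · have : Real.exp (-u) ≤ 1 := Real.exp_le_one_iff.2 (by linarith)
    apply div_nonneg (by positivity) (by linarith)
  · have : 1 ≤ Real.exp (-u) := Real.one_le_exp (by linarith)
    apply div_nonneg_of_nonpos (mul_nonpos_of_nonpos_of_nonneg h (by positivity)) (by linarith)

lemma Ffun_eq {u : ℝ} (hu : 0 < u) : Ffun u = u / (Real.exp u - 1) := by
  unfold Ffun
  have h1 : 1 < Real.exp u := Real.one_lt_exp_iff.2 hu
  have : Real.exp (-u) = (Real.exp u)⁻¹ := Real.exp_neg u
  rw [this]
  have h2 : Real.exp u - 1 ≠ 0 := by linarith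
  have h3 : 1 - (Real.exp u)⁻¹ = (Real.exp u - 1) / Real.exp u := by field_simp
  rw [h3]
  field_simp

lemma Ffun_anti {u v : ℝ} (hu : 0 < u) (huv : u ≤ v) : Ffun v ≤ Ffun u := by
  have hv : 0 < v := by linarith
  rw [Ffun_eq hu, Ffun_eq hv]
  have h1 : 1 < Real.exp u := Real.one_lt_exp_iff.2 hu
  have h2 : 1 < Real.exp v := Real.one_lt_exp_iff.2 hv
  rw [div_le_div_iff₀ (by linarith) (by linarith)]
  have := convexOn_exp.2 (Set.mem_univ v) (Set.mem_univ 0) 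
    (show 0 ≤ u / v by positivity)
    (show 0 ≤ 1 - u / v by rw [sub_nonneg, div_le_one hv]; exact huv) (by ring)
  simp only [smul_eq_mul, mul_zero, add_zero, Real.exp_zero, mul_one] at this
  rw [div_mul_cancel₀ _ hv.ne'] at this
  have h3 : v * Real.exp u ≤ v * (u / v * Real.exp v + (1 - u / v)) := by gcongr
  have h4 : v * (u / v * Real.exp v + (1 - u / v)) = u * Real.exp v + v - u := by field_simp; ring
  nlinarith

lemma Ffun_le_one {u : ℝ} (hu : 0 < u) : Ffun u ≤ 1 := by
  rw [Ffun_eq hu]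
  have := Real.add_one_le_exp u
  rw [div_le_one (by linarith)]
  linarith

lemma Ffun_mul_rpow {u p : ℝ} (hu : 0 < u) (hp : 0 ≤ p) (hp1 : p ≤ 1) : Ffun u * u ^ p ≤ 3 := by
  have h0 : u ^ p ≤ 1 + u := by
    rcases le_total u 1 with h | h
    · have := Real.rpow_le_one hu.le h hp
      linarith
    · have := Real.rpow_le_rpow_of_exponent_le h hp1
      rw [Real.rpow_one] at this
      linarith
  have h1 := Real.quadratic_le_exp_of_nonneg hu.le
  calc Ffun u * u ^ p ≤ Ffun u * (1 + u) := by gcongr; exact Ffun_nonneg u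
    _ ≤ 3 := by
      rw [Ffun_eq hu, div_mul_eq_mul_div, div_le_iff₀ (by nlinarith)]
      nlinarith

lemma Ffun_mul_sq {u : ℝ} (hu : 0 < u) : Ffun u * u ^ 2 ≤ 6 := by
  have h1 := Real.sum_le_exp_of_nonneg hu.le 4
  simp [Finset.sum_range_succ, Nat.factorial] at h1
  rw [Ffun_eq hu, div_mul_eq_mul_div, div_le_iff₀ (by nlinarith [Real.add_one_lt_exp hu.ne'])]
  nlinarith

lemma measurable_Ffun : Measurable Ffun := by
  unfold Ffun; fun_prop

lemma continuous_apoly (r : ℕ) : Continuous (apoly r) := by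
  unfold apoly hpoly; fun_prop

lemma crconst_one_le (r : ℕ) : (1 : ℝ) ≤ crconst r := by
  have : 0 < crconst r := Finset.prod_pos fun i _ => Nat.factorial_pos _
  exact_mod_cast this

lemma hpoly_pos {r : ℕ} {y : Fin r → ℝ} (hy : ∀ i, 0 < y i) : 0 < hpoly r y := by
  refine Finset.prod_pos fun p hp => Finset.sum_pos (fun i _ => hy i) ?_
  simpa using hp

lemma apoly_pos {r : ℕ} {y : Fin r → ℝ} (hy : ∀ i, 0 < y i) : 0 < apoly r y :=
  div_pos (hpoly_pos hy) (by have := crconst_one_le r; linarith)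

lemma apoly_mono {r : ℕ} {y z : Fin r → ℝ} (hy : ∀ i, 0 < y i) (h : ∀ i, y i ≤ z i) :
    apoly r y ≤ apoly r z := by
  unfold apoly hpoly
  gcongr with p hp
  · intro p hp
    exact Finset.sum_nonneg fun i _ => (hy i).le
  · exact h _

/-- nonnegative case of the transport inequality. -/
lemma lovasz_nonneg {ι κ : Type*} [Fintype ι] [DecidableEq ι] [DecidableEq κ] (P : Finset κ) (S : κ → Finset ι)
    (q : ι → ℝ) (p : ℝ)
    (hT : ∀ T : Finset ι, ∑ j ∈ T, q j ≤ p * #{I ∈ P | (S I ∩ T).Nonempty}) (N : ℕ) :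
    ∀ (y : ι → ℝ) (M : κ → ℝ), #{j | y j ≠ 0} = N → (∀ j, 0 ≤ y j) → (∀ I ∈ P, 0 ≤ M I) →
      (0 ≤ p) → (∀ I ∈ P, ∀ j ∈ S I, y j ≤ M I) → ∑ j, q j * y j ≤ p * ∑ I ∈ P, M I := by
  induction N using Nat.strong_induction_on with
  | _ N ih =>
  intro y M hN hy hM hp hyM
  set T : Finset ι := {j | y j ≠ 0} with hTdef
  rcases T.eq_empty_or_nonempty with he | hne
  · have : ∀ j, y j = 0 := by
      intro j
      by_contra h
      have : j ∈ T := by simp [hTdef, h]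
      simp [he] at this
    simp only [this, mul_zero, Finset.sum_const_zero]
    exact mul_nonneg hp (Finset.sum_nonneg hM)
  · obtain ⟨j0, hj0, hmin⟩ := T.exists_min_image y hne
    set m := y j0
    have hm : 0 < m := lt_of_le_of_ne (hy _) (Ne.symm (by simpa [hTdef] using hj0))
    have hmT : ∀ j, j ∉ T → y j = 0 := by intro j hj; simpa [hTdef] using hj
    let y' : ι → ℝ := fun j => y j - if j ∈ T then m else 0
    let M' : κ → ℝ := fun I => M I - if (S I ∩ T).Nonempty then m else 0
    have key := ih (#{j | y' j ≠ 0}) (by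
        rw [← hN]
        apply Finset.card_lt_card
        refine (Finset.ssubset_iff_of_subset ?_).2 ⟨j0, hj0, ?_⟩
        · intro j hj
          by_contra hjT
          simp [y', hjT, hmT j hjT] at hj
        · simp [y', hj0, m]) y' M' rfl ?_ ?_ hp ?_
    · have e1 : ∑ j, q j * y' j = ∑ j, q j * y j - m * ∑ j ∈ T, q j := by
        simp only [y', mul_sub, Finset.sum_sub_distrib, Finset.mul_sum]
        congr 1
        rw [← Finset.sum_filter_add_sum_filter_not Finset.univ (· ∈ T)]
        rw [Finset.sum_congr rfl (g := fun j => m * q j) (by intro j hj; simp at hj; simp [hj, mul_comm]),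
          Finset.sum_eq_zero (s := Finset.univ.filter (· ∉ T)) (by intro j hj; simp at hj; simp [hj])]
        simp
      have e2 : ∑ I ∈ P, M' I = ∑ I ∈ P, M I - m * #{I ∈ P | (S I ∩ T).Nonempty} := by
        simp only [M', Finset.sum_sub_distrib]
        rw [← Finset.sum_filter]
        simp [mul_comm]
      rw [e1, e2] at key
      have := mul_le_mul_of_nonneg_left (hT T) hm.le
      nlinarith
    · intro j
      by_cases hj : j ∈ T
      · simp only [y', hj, if_true]; linarith [hmin j hj]
      · simp [y', hj, hy j]
    · intro I hI
      by_cases h : (S I ∩ T).Nonempty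
      · obtain ⟨j, hj⟩ := h
        have h' : (S I ∩ T).Nonempty := ⟨j, hj⟩
        rw [Finset.mem_inter] at hj
        simp only [M', h', if_true]
        linarith [hmin j hj.2, hyM I hI j hj.1]
      · simp [M', h, hM I hI]
    · intro I hI j hj
      by_cases h : (S I ∩ T).Nonempty
      · obtain ⟨j1, hj1⟩ := id h
        rw [Finset.mem_inter] at hj1
        by_cases hjT : j ∈ T
        · simp only [M', h, y', hjT, if_true]
          linarith [hyM I hI j hj]
        · simp only [M', h, y', hjT, if_true, if_false, hmT j hjT]
          linarith [hmin j1 hj1.2, hyM I hI j1 hj1.1]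
      · have hjT : j ∉ T := fun hjT => h ⟨j, Finset.mem_inter.2 ⟨hj, hjT⟩⟩
        simp only [M', h, y', hjT, if_false]
        linarith [hyM I hI j hj]

lemma lovasz {ι κ : Type*} [Fintype ι] [Nonempty ι] [DecidableEq ι] [DecidableEq κ]
    (P : Finset κ) (S : κ → Finset ι)
    (q : ι → ℝ) (p : ℝ) (hp : 0 ≤ p)
    (hT : ∀ T : Finset ι, ∑ j ∈ T, q j ≤ p * #{I ∈ P | (S I ∩ T).Nonempty})
    (heq : ∑ j, q j = p * #P) (hS : ∀ I ∈ P, (S I).Nonempty)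
    (y : ι → ℝ) (M : κ → ℝ) (hyM : ∀ I ∈ P, ∀ j ∈ S I, y j ≤ M I) :
    ∑ j, q j * y j ≤ p * ∑ I ∈ P, M I := by
  obtain ⟨j0, -, hmin⟩ := Finset.univ.exists_min_image y Finset.univ_nonempty
  have key := lovasz_nonneg P S q p hT _ (fun j => y j - y j0) (fun I => M I - y j0) rfl
    (fun j => sub_nonneg.2 (hmin j (by simp)))
    (fun I hI => by
      obtain ⟨j, hj⟩ := hS I hI
      have := hyM I hI j hj
      have := hmin j (by simp)
      linarith) hp (fun I hI j hj => by linarith [hyM I hI j hj])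
  simp only [mul_sub, Finset.sum_sub_distrib, ← Finset.sum_mul, heq] at key
  simp at key
  nlinarith

lemma card_pairs {r : ℕ} (T : Finset (Fin r)) :
    2 * (#{p : Fin r × Fin r | p.1 ≤ p.2 ∧ (p.1 ∈ T ∨ p.2 ∈ T)} : ℝ) =
      #T * (2 * r - #T + 1) := by
  set A : Finset (Fin r × Fin r) := {p | p.1 ≤ p.2 ∧ (p.1 ∈ T ∨ p.2 ∈ T)}
  set B : Finset (Fin r × Fin r) := {p | p.2 ≤ p.1 ∧ (p.1 ∈ T ∨ p.2 ∈ T)}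
  have h1 : #B = #A := by
    apply Finset.card_bij' (fun p _ => p.swap) (fun p _ => p.swap) <;> simp [A, B] <;> tauto
  have h2 : A ∪ B = Finset.univ \ (Tᶜ ×ˢ Tᶜ) := by
    ext p
    have := le_total p.1 p.2
    simp [A, B]
    tauto
  have h3 : A ∩ B = T.image (fun x => (x, x)) := by
    ext ⟨a, b⟩
    simp only [A, B, Finset.mem_inter, Finset.mem_filter, Finset.mem_univ, true_and, Finset.mem_image, Prod.mk.injEq]
    constructor
    · rintro ⟨⟨h1, h2⟩, h3, -⟩
      have : a = b := le_antisymm h1 h3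
      subst this
      exact ⟨a, by tauto, rfl, rfl⟩
    · rintro ⟨x, hx, rfl, rfl⟩
      simp [hx]
  have h4 : #(A ∩ B) = #T := by
    rw [h3, Finset.card_image_of_injective]
    intro a b h; simpa using h
  have h5 := Finset.card_union_add_card_inter A B
  have h6 : #(A ∪ B) + #(Tᶜ ×ˢ Tᶜ) = r * r := by
    rw [h2, Finset.card_sdiff_add_card_eq_card (Finset.subset_univ _)]
    simp
  have h7 : #T + #Tᶜ = r := by rw [Finset.card_add_card_compl]; simp
  rw [Finset.card_product] at h6
  have h5' : (#(A ∪ B) : ℝ) + #T = #A + #A := by rw [h4, h1] at h5; exact_mod_cast h5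
  have h6' : (#(A ∪ B) : ℝ) + #Tᶜ * #Tᶜ = r * r := by exact_mod_cast h6
  have h7' : (#T : ℝ) + #Tᶜ = r := by exact_mod_cast h7
  have h8 : (#Tᶜ : ℝ) = r - #T := by linarith
  rw [h8] at h6'
  linarith

noncomputable def phi (ε v : ℝ) : ℝ := (v ^ (if v ≤ 1 then 1 - ε else 1 + ε))⁻¹

lemma count_bound {n : ℕ} (i : Fin (n + 1)) (T : Finset (Fin n)) :
    (#T : ℝ) * (2 * n - #T + 3) ≤
      2 * (#{p ∈ ({p | p.1 ≤ p.2 ∧ p ≠ (i, i)} : Finset (Fin (n + 1) × Fin (n + 1))) |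
        (({j | i.succAbove j ∈ Finset.Icc p.1 p.2} : Finset (Fin n)) ∩ T).Nonempty} : ℝ) := by
  set T' := T.map i.succAboveEmb
  have h := card_pairs T'
  rw [Finset.card_map] at h
  have e : (#T : ℝ) * (2 * n - #T + 3) = #T * (2 * (n + 1 : ℕ) - #T + 1) := by push_cast; ring
  rw [e, ← h]
  gcongr
  rintro ⟨a, b⟩ hp
  simp only [T', Finset.mem_filter, Finset.mem_univ, true_and, Finset.mem_map,
    Fin.coe_succAboveEmb] at hp
  obtain ⟨hab, h⟩ := hp
  simp only [Finset.mem_filter, Finset.mem_univ, true_and]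
  refine ⟨⟨hab, ?_⟩, ?_⟩
  · rintro h'
    simp only [Prod.mk.injEq] at h'
    rcases h with ⟨x, -, hx⟩ | ⟨x, -, hx⟩
    · exact Fin.succAbove_ne i x (hx.trans h'.1)
    · exact Fin.succAbove_ne i x (hx.trans h'.2)
  · rcases h with ⟨x, hx, rfl⟩ | ⟨x, hx, rfl⟩
    · exact ⟨x, by simp [hx, hab]⟩
    · exact ⟨x, by simp [hx, hab]⟩

lemma card_P {n : ℕ} (i : Fin (n + 1)) :
    (#({p | p.1 ≤ p.2 ∧ p ≠ (i, i)} : Finset (Fin (n + 1) × Fin (n + 1))) : ℝ) = n * (n + 3) / 2 := by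
  have h := card_pairs (Finset.univ : Finset (Fin (n + 1)))
  have h1 : ({p | p.1 ≤ p.2 ∧ p ≠ (i, i)} : Finset (Fin (n + 1) × Fin (n + 1))) =
    ({p | p.1 ≤ p.2 ∧ (p.1 ∈ (Finset.univ : Finset (Fin (n + 1))) ∨ p.2 ∈ (Finset.univ : Finset (Fin (n + 1))))} : Finset (Fin (n + 1) × Fin (n + 1))).erase (i, i) := by
    ext p
    simp
    tauto
  rw [h1, Finset.card_erase_of_mem (by simp), Nat.cast_sub (Finset.card_pos.2 ⟨(i, i), by simp⟩)]
  simp only [Finset.card_univ, Fintype.card_fin] at h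
  push_cast at h ⊢
  linarith

lemma pointwise_aux (n : ℕ) (hn : 1 ≤ n) (i : Fin (n + 1)) (t : Fin (n + 1) → ℝ) (ht : ∀ j, 0 < t j)
    (b ε : ℝ) (hb : b = 2 / (n * (n + 3))) (hε : ε = 1 / (2 * n + 7)) :
    ∃ p : ℝ, 0 ≤ p ∧ p ≤ 1 ∧
      ∏ j : Fin n, (phi ε (t (i.succAbove j) * t i ^ b))⁻¹ ≤ hpoly (n + 1) t ^ p := by
  have hn' : (1 : ℝ) ≤ n := by exact_mod_cast hn
  have hε0 : 0 < ε := by rw [hε]; positivity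
  have hε1 : ε < 1 := by rw [hε, div_lt_one (by positivity)]; linarith
  have hεm : ε * (2 * n + 7) = 1 := by rw [hε]; field_simp
  set v : Fin n → ℝ := fun j => t (i.succAbove j) * t i ^ b with hv
  have hvpos : ∀ j, 0 < v j := fun j => mul_pos (ht _) (Real.rpow_pos_of_pos (ht _) _)
  set q : Fin n → ℝ := fun j => if v j ≤ 1 then 1 - ε else 1 + ε with hq
  have hq1 : ∀ j, 1 - ε ≤ q j := by intro j; simp only [hq]; split_ifs <;> linarith
  have hq2 : ∀ j, q j ≤ 1 + ε := by intro j; simp only [hq]; split_ifs <;> linarith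
  set P : Finset (Fin (n + 1) × Fin (n + 1)) := {p | p.1 ≤ p.2 ∧ p ≠ (i, i)} with hP
  set S : Fin (n + 1) × Fin (n + 1) → Finset (Fin n) :=
    fun p => {j | i.succAbove j ∈ Finset.Icc p.1 p.2} with hS
  have hPc : (#P : ℝ) = n * (n + 3) / 2 := card_P i
  set p : ℝ := (∑ j, q j) / #P with hp
  have hs1 : (n : ℝ) * (1 - ε) ≤ ∑ j, q j := by
    have := Finset.sum_le_sum (s := Finset.univ) fun j _ => hq1 j
    simpa [mul_sub] using this
  have hs2 : ∀ T : Finset (Fin n), ∑ j ∈ T, q j ≤ #T * (1 + ε) := fun T => by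
    have := Finset.sum_le_sum (s := T) fun j _ => hq2 j
    simpa [mul_add] using this
  have hPpos : (0 : ℝ) < #P := by rw [hPc]; positivity
  have hp0 : 0 ≤ p := by
    apply div_nonneg _ hPpos.le
    have : 0 ≤ 1 - ε := by linarith
    exact le_trans (by positivity) hs1
  have hpe : ∑ j, q j = p * #P := by rw [hp]; field_simp
  have hpl : 2 * (1 - ε) ≤ p * (n + 3) := by
    have : (n : ℝ) * (2 * (1 - ε)) ≤ n * (p * (n + 3)) := by
      rw [hpe, hPc] at hs1
      linarith
    exact le_of_mul_le_mul_left this (by linarith)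
  have hp1 : p ≤ 1 := by
    have h := hs2 Finset.univ
    rw [hp, div_le_one hPpos, hPc]
    refine h.trans ?_
    simp only [Finset.card_univ, Fintype.card_fin]
    nlinarith
  have hSne : ∀ I ∈ P, (S I).Nonempty := by
    rintro ⟨a, c⟩ hI
    simp only [hP, Finset.mem_filter, Finset.mem_univ, true_and, ne_eq, Prod.mk.injEq] at hI
    by_cases h : a = i
    · have : c ≠ i := fun h' => hI.2 ⟨h, h'⟩
      obtain ⟨j, rfl⟩ := Fin.exists_succAbove_eq this
      exact ⟨j, by simp [hS, hI.1]⟩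
    · obtain ⟨j, rfl⟩ := Fin.exists_succAbove_eq h
      exact ⟨j, by simp [hS, hI.1]⟩
  have hT : ∀ T : Finset (Fin n), ∑ j ∈ T, q j ≤ p * #{I ∈ P | (S I ∩ T).Nonempty} := by
    intro T
    by_cases hTu : T = Finset.univ
    · subst hTu
      rw [hpe]
      have : ({I ∈ P | (S I ∩ Finset.univ).Nonempty} : Finset _) = P := by
        apply Finset.filter_true_of_mem
        intro I hI
        simpa using hSne I hI
      rw [this]
    · have hk : #T + 1 ≤ n := by
        have := Finset.card_lt_card (Finset.ssubset_univ_iff.2 hTu)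
        simpa using this
      have hk' : (#T : ℝ) + 1 ≤ n := by exact_mod_cast hk
      have hc := count_bound i T
      have h1 := hs2 T
      have h2 : p * (#T * (2 * n - #T + 3)) ≤ p * (2 * #{I ∈ P | (S I ∩ T).Nonempty}) :=
        mul_le_mul_of_nonneg_left hc hp0
      have h3 : 2 * (1 + ε) ≤ p * (2 * n - #T + 3) := by
        have h4 : p * (n + 4) ≤ p * (2 * n - #T + 3) := by
          apply mul_le_mul_of_nonneg_left _ hp0
          linarith
        refine le_trans ?_ h4
        have h5 : 2 * (1 + ε) * (n + 3) ≤ p * (n + 4) * (n + 3) := by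
          have : 2 * (1 - ε) * (n + 4) ≤ p * (n + 3) * (n + 4) := by gcongr
          nlinarith
        exact le_of_mul_le_mul_right h5 (by linarith)
      have h6 : (#T : ℝ) * (2 * (1 + ε)) ≤ #T * (p * (2 * n - #T + 3)) :=
        mul_le_mul_of_nonneg_left h3 (Nat.cast_nonneg _)
      linarith
  have : Nonempty (Fin n) := ⟨⟨0, hn⟩⟩
  have key := lovasz P S q p hp0 hT hpe hSne (fun j => Real.log (v j))
    (fun I => Real.log (∑ k ∈ Finset.Icc I.1 I.2, t k) + b * Real.log (t i)) (by
      intro I hI j hj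
      simp only [hS, Finset.mem_filter, Finset.mem_univ, true_and] at hj
      simp only [hv]
      rw [Real.log_mul (ht _).ne' (Real.rpow_pos_of_pos (ht _) _).ne', Real.log_rpow (ht _)]
      gcongr
      · exact ht _
      · exact Finset.single_le_sum (f := t) (fun k _ => (ht k).le) hj)
  have hlog : Real.log (hpoly (n + 1) t) =
      ∑ I ∈ P, (Real.log (∑ k ∈ Finset.Icc I.1 I.2, t k) + b * Real.log (t i)) := by
    unfold hpoly
    have hne : ∀ x ∈ Finset.univ.filter (fun p : Fin (n+1) × Fin (n+1) => p.1 ≤ p.2),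
        ∑ k ∈ Finset.Icc x.1 x.2, t k ≠ 0 := by
      intro x hx
      refine (Finset.sum_pos (fun i _ => ht i) ?_).ne'
      simpa using hx
    rw [Real.log_prod hne, Finset.sum_add_distrib, Finset.sum_const, nsmul_eq_mul, hPc, hb]
    rw [← Finset.sum_erase_add (a := (i, i)) _ _ (by simp)]
    congr 1
    · apply Finset.sum_congr _ fun _ _ => rfl
      ext x
      simp [hP]
      tauto
    · simp
      field_simp
  rw [← hlog] at key
  refine ⟨p, hp0, hp1, ?_⟩
  have e1 : ∏ j : Fin n, (phi ε (v j))⁻¹ = Real.exp (∑ j, q j * Real.log (v j)) := by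
    rw [Real.exp_sum]
    refine Finset.prod_congr rfl fun j _ => ?_
    rw [phi, inv_inv, Real.rpow_def_of_pos (hvpos j), mul_comm]
  rw [e1, Real.rpow_def_of_pos (hpoly_pos ht), mul_comm (Real.log _)]
  exact Real.exp_le_exp.2 key

lemma phi_pos {ε v : ℝ} (hv : 0 < v) : 0 < phi ε v := inv_pos.2 (Real.rpow_pos_of_pos hv _)

lemma pointwise (n : ℕ) (i : Fin (n + 1)) (t : Fin (n + 1) → ℝ) (ht : ∀ j, 0 < t j)
    (b ε : ℝ) (hb : b = 2 / (n * (n + 3))) (hε : ε = 1 / (2 * n + 7)) :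
    Ffun (apoly (n + 1) t) ≤
      3 * crconst (n + 1) * ∏ j : Fin n, phi ε (t (i.succAbove j) * t i ^ b) := by
  have hc := crconst_one_le (n + 1)
  rcases Nat.eq_zero_or_pos n with rfl | hn
  · simp only [Finset.univ_eq_empty, Finset.prod_empty]
    have := Ffun_le_one (apoly_pos ht)
    linarith
  · obtain ⟨p, hp0, hp1, h⟩ := pointwise_aux n hn i t ht b ε hb hε
    have hpos : 0 < ∏ j : Fin n, phi ε (t (i.succAbove j) * t i ^ b) :=
      Finset.prod_pos fun j _ => phi_pos (mul_pos (ht _) (Real.rpow_pos_of_pos (ht _) _))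
    rw [Finset.prod_inv_distrib] at h
    have hh : hpoly (n + 1) t = crconst (n + 1) * apoly (n + 1) t := by
      unfold apoly; field_simp
    rw [hh, Real.mul_rpow (by linarith) (apoly_pos ht).le] at h
    have h2 : ((crconst (n + 1) : ℕ) : ℝ) ^ p ≤ crconst (n + 1) := by
      simpa using Real.rpow_le_rpow_of_exponent_le hc hp1
    have h3 := Ffun_mul_rpow (apoly_pos ht) hp0 hp1
    have hF := Ffun_nonneg (apoly (n + 1) t)
    have ha := Real.rpow_pos_of_pos (apoly_pos ht) p
    rw [← div_le_iff₀ hpos, div_eq_mul_inv]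
    calc _ ≤ Ffun (apoly (n + 1) t) * ((crconst (n + 1) : ℝ) ^ p * apoly (n + 1) t ^ p) := by gcongr
      _ ≤ Ffun (apoly (n + 1) t) * ((crconst (n + 1) : ℝ) * apoly (n + 1) t ^ p) := by gcongr
      _ = (Ffun (apoly (n + 1) t) * apoly (n + 1) t ^ p) * (crconst (n + 1) : ℝ) := by ring
      _ ≤ 3 * crconst (n + 1) := by gcongr

lemma measurable_phi (ε : ℝ) : Measurable (phi ε) := by
  unfold phi
  apply Measurable.inv
  apply Measurable.pow measurable_id
  exact Measurable.ite measurableSet_Iic measurable_const measurable_const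

noncomputable def Gfun (ε : ℝ) : ℝ → ENNReal :=
  (Set.Ioi (0 : ℝ)).indicator (fun u => ENNReal.ofReal (phi ε u))

lemma measurable_Gfun (ε : ℝ) : Measurable (Gfun ε) :=
  ((measurable_phi ε).ennreal_ofReal).indicator measurableSet_Ioi

lemma lint_rpow {a s : ℝ} (ha : -1 < a) (hs : 0 < s) :
    ∫⁻ x in Set.Ioc 0 s, ENNReal.ofReal (x ^ a) = ENNReal.ofReal (s ^ (a + 1) / (a + 1)) := by
  have h1 : IntegrableOn (fun x : ℝ => x ^ a) (Set.Ioc 0 s) := by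
    rw [← intervalIntegrable_iff_integrableOn_Ioc_of_le hs.le]
    exact intervalIntegral.intervalIntegrable_rpow' ha
  rw [← ofReal_integral_eq_lintegral_ofReal h1]
  · rw [← intervalIntegral.integral_of_le hs.le, integral_rpow (Or.inl ha),
      Real.zero_rpow (by linarith), sub_zero]
  · filter_upwards [ae_restrict_mem measurableSet_Ioc] with x hx
    exact Real.rpow_nonneg hx.1.le _

lemma lint_G {ε : ℝ} (h0 : 0 < ε) : ∫⁻ u, Gfun ε u ≠ ⊤ := by
  rw [Gfun, lintegral_indicator measurableSet_Ioi]
  have : Set.Ioi (0 : ℝ) = Set.Ioc 0 1 ∪ Set.Ioi 1 := by simp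
  rw [this]
  refine ((lintegral_union_le _ _ _).trans_lt (ENNReal.add_lt_top.2 ⟨?_, ?_⟩)).ne
  · have : ∫⁻ u in Set.Ioc (0 : ℝ) 1, ENNReal.ofReal (phi ε u) =
        ∫⁻ u in Set.Ioc (0 : ℝ) 1, ENNReal.ofReal (u ^ (-1 + ε)) := by
      refine setLIntegral_congr_fun measurableSet_Ioc fun u hu => ?_
      simp only [phi, hu.2, if_true]
      rw [← Real.rpow_neg hu.1.le]; ring_nf
    rw [this, lint_rpow (by linarith) one_pos]
    exact ENNReal.ofReal_lt_top
  · have : ∫⁻ u in Set.Ioi (1 : ℝ), ENNReal.ofReal (phi ε u) =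
        ∫⁻ u in Set.Ioi (1 : ℝ), ENNReal.ofReal (u ^ (-1 - ε)) := by
      refine setLIntegral_congr_fun measurableSet_Ioi fun u hu => ?_
      have hu : 1 < u := hu
      simp only [phi, not_le.2 hu, if_false]
      rw [← Real.rpow_neg (by linarith)]; ring_nf
    rw [this]
    exact (integrableOn_Ioi_rpow_of_lt (a := -1 - ε) (by linarith) one_pos).lintegral_lt_top

lemma lint_scale {g : ℝ → ENNReal} (hg : Measurable g) {a : ℝ} (ha : 0 < a) :
    ∫⁻ u, g (u * a) = ENNReal.ofReal a⁻¹ * ∫⁻ u, g u := by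
  rw [← lintegral_map hg (by fun_prop : Measurable fun u : ℝ => u * a),
    Real.map_volume_mul_right ha.ne', lintegral_smul_measure, abs_of_pos (inv_pos.2 ha)]
  rfl

lemma lint_succAbove {n : ℕ} (i : Fin (n + 1)) (f : ℝ → (Fin n → ℝ) → ENNReal)
    (hf : Measurable (Function.uncurry f)) :
    ∫⁻ t : Fin (n + 1) → ℝ, f (t i) (fun j => t (i.succAbove j)) =
      ∫⁻ x, ∫⁻ y, f x y := by
  have h := (volume_preserving_piFinSuccAbove (fun _ : Fin (n + 1) => ℝ) i).lintegral_comp hf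
  rw [Measure.volume_eq_prod, lintegral_prod _ hf.aemeasurable] at h
  exact h

lemma lint_pow {g : ℝ → ENNReal} (hg : Measurable g) (n : ℕ) :
    ∫⁻ x : Fin n → ℝ, ∏ j, g (x j) = (∫⁻ u, g u) ^ n := by
  induction n with
  | zero => simp [lintegral_unique, volume_pi]
  | succ n ih =>
    have := lint_succAbove (0 : Fin (n + 1)) (fun x y => g x * ∏ j, g (y j))
      (by unfold Function.uncurry; fun_prop)
    simp only [Fin.prod_univ_succ]
    simp only [Fin.zero_succAbove] at this
    rw [this]
    have hm : Measurable fun y : Fin n → ℝ => ∏ j, g (y j) := by fun_prop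
    simp only [lintegral_const_mul _ hm]
    rw [lintegral_mul_const _ hg, ih, pow_succ, mul_comm]

lemma B_bound (n : ℕ) (i : Fin (n + 1)) : ∃ C : ℝ, 0 ≤ C ∧ ∀ s : ℝ, 0 < s → s ≤ 1 →
    ∫⁻ t in {t : Fin (n + 1) → ℝ | (∀ j, 0 < t j) ∧ t i ≤ s}, ENNReal.ofReal (Ffun (apoly (n + 1) t)) ≤
      ENNReal.ofReal (C * s ^ ((1 : ℝ) / (n + 1 : ℕ))) := by
  obtain ⟨b, hb⟩ : ∃ b : ℝ, b = 2 / (n * (n + 3)) := ⟨_, rfl⟩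
  obtain ⟨ε, hε⟩ : ∃ ε : ℝ, ε = 1 / (2 * n + 7) := ⟨_, rfl⟩
  have hε0 : 0 < ε := by rw [hε]; positivity
  have hK := lint_G hε0
  set K := ∫⁻ u, Gfun ε u with hKdef
  set c : ℝ := 3 * crconst (n + 1) with hc
  have hc0 : 0 ≤ c := by positivity
  have hbn : (1 : ℝ) / (n + 1 : ℕ) ≤ 1 - b * n := by
    rcases Nat.eq_zero_or_pos n with rfl | hn
    · simp
    · have hn' : (1 : ℝ) ≤ n := by exact_mod_cast hn
      have : 1 - b * n = (n + 1) / (n + 3) := by rw [hb]; field_simp; ring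
      rw [this, div_le_div_iff₀ (by positivity) (by positivity)]
      push_cast
      nlinarith
  have hpos : (0 : ℝ) < 1 / (n + 1 : ℕ) := by positivity
  refine ⟨c * K.toReal ^ n * (n + 1), by positivity, fun s hs hs1 => ?_⟩
  have hmeas : MeasurableSet {t : Fin (n + 1) → ℝ | (∀ j, 0 < t j) ∧ t i ≤ s} := by
    measurability
  let f : ℝ → (Fin n → ℝ) → ENNReal := fun x y =>
    (Set.Ioc 0 s).indicator (fun _ => ENNReal.ofReal c) x * ∏ j, Gfun ε (y j * x ^ b)
  have hf : Measurable (Function.uncurry f) := by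
    have h1 : Measurable ((Set.Ioc 0 s).indicator (fun _ : ℝ => ENNReal.ofReal c)) :=
      measurable_const.indicator measurableSet_Ioc
    have h2 := measurable_Gfun ε
    simp only [f, Function.uncurry_def]
    fun_prop
  calc ∫⁻ t in {t : Fin (n + 1) → ℝ | (∀ j, 0 < t j) ∧ t i ≤ s}, ENNReal.ofReal (Ffun (apoly (n + 1) t))
      ≤ ∫⁻ t in {t : Fin (n + 1) → ℝ | (∀ j, 0 < t j) ∧ t i ≤ s}, f (t i) (fun j => t (i.succAbove j)) := by
        refine setLIntegral_mono' hmeas ?_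
        rintro t ⟨ht, hts⟩
        have h1 : t i ∈ Set.Ioc 0 s := ⟨ht i, hts⟩
        have h3 : ∀ j, 0 < t (i.succAbove j) * t i ^ b :=
          fun j => mul_pos (ht _) (Real.rpow_pos_of_pos (ht _) _)
        have h2 : ∀ j, Gfun ε (t (i.succAbove j) * t i ^ b) =
            ENNReal.ofReal (phi ε (t (i.succAbove j) * t i ^ b)) := by
          intro j
          exact Set.indicator_of_mem (Set.mem_Ioi.2 (h3 j)) _
        simp only [f, Set.indicator_of_mem h1, h2]
        rw [← ENNReal.ofReal_prod_of_nonneg fun j _ => (phi_pos (h3 j)).le,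
          ← ENNReal.ofReal_mul hc0]
        exact ENNReal.ofReal_le_ofReal (pointwise n i t ht b ε hb hε)
    _ ≤ ∫⁻ t : Fin (n + 1) → ℝ, f (t i) (fun j => t (i.succAbove j)) := setLIntegral_le_lintegral _ _
    _ = ∫⁻ x, ∫⁻ y, f x y := lint_succAbove i f hf
    _ = ∫⁻ x, (Set.Ioc 0 s).indicator
          (fun x => ENNReal.ofReal c * K ^ n * ENNReal.ofReal (x ^ (-(b * n)))) x := by
        refine lintegral_congr fun x => ?_
        by_cases hx : x ∈ Set.Ioc 0 s
        · have hxb : 0 < x ^ b := Real.rpow_pos_of_pos hx.1 _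
          simp only [f, Set.indicator_of_mem hx]
          have hm : Measurable fun u : ℝ => Gfun ε (u * x ^ b) :=
            (measurable_Gfun ε).comp (by fun_prop)
          have h2 := measurable_Gfun ε
          rw [lintegral_const_mul _ (by fun_prop), lint_pow hm, lint_scale (measurable_Gfun ε) hxb,
            mul_pow, ← hKdef, ← ENNReal.ofReal_pow (by positivity), mul_assoc, mul_comm (K ^ n)]
          congr 3
          rw [Real.rpow_neg hx.1.le, inv_pow, Real.rpow_mul hx.1.le, Real.rpow_natCast]
        · simp [f, Set.indicator_of_notMem hx]
    _ = ENNReal.ofReal c * K ^ n * ENNReal.ofReal (s ^ (-(b * n) + 1) / (-(b * n) + 1)) := by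
        rw [lintegral_indicator measurableSet_Ioc, lintegral_const_mul _ (by fun_prop),
          lint_rpow (by linarith) hs]
    _ ≤ _ := by
        rw [← ENNReal.ofReal_toReal hK, ← ENNReal.ofReal_pow (by positivity),
          ← ENNReal.ofReal_mul hc0, ← ENNReal.ofReal_mul (by positivity)]
        apply ENNReal.ofReal_le_ofReal
        rw [ENNReal.toReal_ofReal (by positivity), mul_assoc (c * K.toReal ^ n)]
        gcongr
        have e1 : s ^ (-(b * n) + 1) ≤ s ^ ((1 : ℝ) / (n + 1 : ℕ)) :=
          Real.rpow_le_rpow_of_exponent_ge hs hs1 (by linarith)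
        rw [div_le_iff₀ (by linarith)]
        have e2 : (1 : ℝ) ≤ (n + 1) * (-(b * n) + 1) := by
          rw [div_le_iff₀ (by positivity)] at hbn
          push_cast at hbn
          linarith
        have e3 := Real.rpow_pos_of_pos hs ((1 : ℝ) / (n + 1 : ℕ))
        nlinarith

lemma hpoly_ge_prod {r : ℕ} {t : Fin r → ℝ} (ht : ∀ i, 1 ≤ t i) : ∏ i, t i ≤ hpoly r t := by
  have e : ∏ i, t i = ∏ p ∈ Finset.univ.filter (fun p : Fin r × Fin r => p.1 ≤ p.2),
      if p.1 = p.2 then t p.1 else 1 := by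
    rw [← Finset.prod_filter]
    symm
    refine Finset.prod_bij' (fun p _ => p.1) (fun i _ => (i, i)) ?_ ?_ ?_ ?_ ?_ <;> simp
  rw [e]
  unfold hpoly
  refine Finset.prod_le_prod (fun p _ => ?_) (fun p hp => ?_)
  · have := ht p.1
    split_ifs <;> linarith
  · have h1 : t p.1 ≤ ∑ i ∈ Finset.Icc p.1 p.2, t i := by
      refine Finset.single_le_sum (f := t) (fun k _ => by linarith [ht k]) ?_
      simpa using hp
    have := ht p.1
    split_ifs <;> linarith

lemma far_fin (r : ℕ) :
    ∫⁻ t in {t : Fin r → ℝ | ∀ i, 1 < t i}, ENNReal.ofReal (Ffun (apoly r t)) < ⊤ := by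
  set c : ℝ := ((crconst r : ℕ) : ℝ) with hc
  have hc1 : 1 ≤ c := crconst_one_le r
  let g : ℝ → ENNReal := (Set.Ioi 1).indicator (fun u => ENNReal.ofReal (u ^ (-2 : ℝ)))
  have hg : Measurable g := Measurable.indicator (by fun_prop) measurableSet_Ioi
  have hgfin : ∫⁻ u, g u < ⊤ := by
    simp only [g]
    rw [lintegral_indicator measurableSet_Ioi]
    exact (integrableOn_Ioi_rpow_of_lt (by norm_num) one_pos).lintegral_lt_top
  have hmeas : MeasurableSet {t : Fin r → ℝ | ∀ i, 1 < t i} := by measurability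
  calc _ ≤ ∫⁻ t in {t : Fin r → ℝ | ∀ i, 1 < t i}, ENNReal.ofReal (6 * c ^ 2) * ∏ i, g (t i) := by
        refine setLIntegral_mono' hmeas fun t ht => ?_
        have ht : ∀ i, 1 < t i := ht
        have ht0 : ∀ i, 0 < t i := fun i => by linarith [ht i]
        have e : ∀ i, g (t i) = ENNReal.ofReal ((t i ^ 2)⁻¹) := by
          intro i
          simp only [g]
          rw [Set.indicator_of_mem (Set.mem_Ioi.2 (ht i)), Real.rpow_neg (ht0 i).le]
          norm_cast
        simp only [e]
        rw [← ENNReal.ofReal_prod_of_nonneg fun j _ => by positivity,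
          ← ENNReal.ofReal_mul (by positivity)]
        apply ENNReal.ofReal_le_ofReal
        rw [Finset.prod_inv_distrib, Finset.prod_pow, ← div_eq_mul_inv]
        have hp : 0 < ∏ i, t i := Finset.prod_pos fun i _ => ht0 i
        rw [le_div_iff₀ (by positivity)]
        have h1 := hpoly_ge_prod fun i => (ht i).le
        have hh : hpoly r t = c * apoly r t := by
          rw [apoly, ← hc]; field_simp
        rw [hh] at h1
        have h2 := Ffun_mul_sq (apoly_pos ht0)
        have hF := Ffun_nonneg (apoly r t)
        calc _ ≤ Ffun (apoly r t) * (c * apoly r t) ^ 2 := by gcongr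
          _ = (Ffun (apoly r t) * apoly r t ^ 2) * c ^ 2 := by ring
          _ ≤ _ := by gcongr
    _ ≤ ∫⁻ t : Fin r → ℝ, ENNReal.ofReal (6 * c ^ 2) * ∏ i, g (t i) := setLIntegral_le_lintegral _ _
    _ = ENNReal.ofReal (6 * c ^ 2) * (∫⁻ u, g u) ^ r := by
        rw [lintegral_const_mul _ (by fun_prop), lint_pow hg]
    _ < ⊤ := ENNReal.mul_lt_top ENNReal.ofReal_lt_top (ENNReal.pow_lt_top hgfin)

lemma near_far (n : ℕ) (s : ℝ) (f : (Fin (n + 1) → ℝ) → ENNReal) :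
    ∫⁻ t in {t : Fin (n + 1) → ℝ | ∀ i, 0 < t i}, f t ≤
      (∑ i, ∫⁻ t in {t : Fin (n + 1) → ℝ | (∀ j, 0 < t j) ∧ t i ≤ s}, f t) +
      ∫⁻ t in {t : Fin (n + 1) → ℝ | ∀ i, s < t i}, f t := by
  have hsub : {t : Fin (n + 1) → ℝ | ∀ i, 0 < t i} ⊆
      (⋃ i, {t : Fin (n + 1) → ℝ | (∀ j, 0 < t j) ∧ t i ≤ s}) ∪
      {t : Fin (n + 1) → ℝ | ∀ i, s < t i} := by
    intro t ht
    by_cases h : ∀ i, s < t i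
    · exact Or.inr h
    · push Not at h
      obtain ⟨i, hi⟩ := h
      exact Or.inl (Set.mem_iUnion.2 ⟨i, ht, hi⟩)
  refine (lintegral_mono_set hsub).trans ((lintegral_union_le _ _ _).trans ?_)
  gcongr
  exact (lintegral_iUnion_le _ _).trans (by rw [tsum_fintype])

lemma upper_cubes (r : ℕ) {s : ℝ} (hs : 0 < s) :
    ∑' k, ENNReal.ofReal (sumTerm r s k) ≤
      ∫⁻ t in {t : Fin r → ℝ | ∀ i, 0 < t i}, ENNReal.ofReal (Ffun (apoly r t)) := by
  let U : {k : Fin r → ℕ // ∀ i, 0 < k i} → Set (Fin r → ℝ) :=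
    fun k => Set.pi Set.univ fun i => Set.Ioc (s * k.1 i - s) (s * k.1 i)
  have hUm : ∀ k, MeasurableSet (U k) := fun k => MeasurableSet.univ_pi fun i => measurableSet_Ioc
  have hU0 : ∀ k, ∀ t ∈ U k, ∀ i, 0 < t i := by
    intro k t ht i
    have h := ht i (Set.mem_univ i)
    have hk : (1 : ℝ) ≤ k.1 i := by exact_mod_cast k.2 i
    have := h.1
    nlinarith
  have hUv : ∀ k, volume (U k) = ENNReal.ofReal (s ^ r) := by
    intro k
    simp only [U]
    rw [Real.volume_pi_Ioc]
    simp [ENNReal.ofReal_pow hs.le]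
  have hdisj : Pairwise (Function.onFun Disjoint U) := by
    intro k l hkl
    rw [Function.onFun, Set.disjoint_left]
    intro t h1 h2
    apply hkl
    ext i
    have a := h1 i (Set.mem_univ i)
    have b := h2 i (Set.mem_univ i)
    have c1 : s * (k.1 i : ℝ) < s * ((l.1 i : ℝ) + 1) := by linarith [a.1, b.2]
    have c2 : s * (l.1 i : ℝ) < s * ((k.1 i : ℝ) + 1) := by linarith [b.1, a.2]
    have d1 := lt_of_mul_lt_mul_left c1 hs.le
    have d2 := lt_of_mul_lt_mul_left c2 hs.le
    have d1' : k.1 i < l.1 i + 1 := by exact_mod_cast d1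
    have d2' : l.1 i < k.1 i + 1 := by exact_mod_cast d2
    omega
  calc ∑' k, ENNReal.ofReal (sumTerm r s k)
      ≤ ∑' k, ∫⁻ t in U k, ENNReal.ofReal (Ffun (apoly r t)) := by
        refine ENNReal.tsum_le_tsum fun k => ?_
        rw [sumTerm, ENNReal.ofReal_mul (Ffun_nonneg _), ← hUv k, ← setLIntegral_const]
        refine setLIntegral_mono' (hUm k) fun t ht => ?_
        apply ENNReal.ofReal_le_ofReal
        exact Ffun_anti (apoly_pos (hU0 k t ht))
          (apoly_mono (hU0 k t ht) fun i => (ht i (Set.mem_univ i)).2)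
    _ = ∫⁻ t in ⋃ k, U k, ENNReal.ofReal (Ffun (apoly r t)) := by
        rw [lintegral_iUnion hUm hdisj]
    _ ≤ _ := lintegral_mono_set (Set.iUnion_subset fun k t ht => hU0 k t ht)

lemma lower_cubes (r : ℕ) {s : ℝ} (hs : 0 < s) :
    ∫⁻ t in {t : Fin r → ℝ | ∀ i, s ≤ t i}, ENNReal.ofReal (Ffun (apoly r t)) ≤
      ∑' k, ENNReal.ofReal (sumTerm r s k) := by
  let L : {k : Fin r → ℕ // ∀ i, 0 < k i} → Set (Fin r → ℝ) :=
    fun k => Set.pi Set.univ fun i => Set.Ico (s * k.1 i) (s * k.1 i + s)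
  have hLm : ∀ k, MeasurableSet (L k) := fun k => MeasurableSet.univ_pi fun i => measurableSet_Ico
  have hLv : ∀ k, volume (L k) = ENNReal.ofReal (s ^ r) := by
    intro k
    simp only [L]
    rw [Real.volume_pi_Ico]
    simp [ENNReal.ofReal_pow hs.le]
  have hsub : {t : Fin r → ℝ | ∀ i, s ≤ t i} ⊆ ⋃ k, L k := by
    intro t ht
    have ht : ∀ i, s ≤ t i := ht
    have h0 : ∀ i, 0 ≤ t i / s := fun i => div_nonneg (hs.le.trans (ht i)) hs.le
    refine Set.mem_iUnion.2 ⟨⟨fun i => ⌊t i / s⌋₊, fun i => Nat.floor_pos.2 ?_⟩, fun i _ => ⟨?_, ?_⟩⟩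
    · rw [le_div_iff₀ hs]; linarith [ht i]
    · have := Nat.floor_le (h0 i)
      rw [le_div_iff₀ hs] at this
      simpa [mul_comm] using this
    · have := Nat.lt_floor_add_one (t i / s)
      rw [div_lt_iff₀ hs] at this
      simp only
      linarith
  calc _ ≤ ∫⁻ t in ⋃ k, L k, ENNReal.ofReal (Ffun (apoly r t)) := lintegral_mono_set hsub
    _ ≤ ∑' k, ∫⁻ t in L k, ENNReal.ofReal (Ffun (apoly r t)) := lintegral_iUnion_le _ _
    _ ≤ ∑' k, ENNReal.ofReal (sumTerm r s k) := by
        refine ENNReal.tsum_le_tsum fun k => ?_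
        rw [sumTerm, ENNReal.ofReal_mul (Ffun_nonneg _), ← hLv k, ← setLIntegral_const]
        refine setLIntegral_mono' (hLm k) fun t ht => ?_
        apply ENNReal.ofReal_le_ofReal
        have hk : ∀ i, 0 < s * (k.1 i : ℝ) := fun i => mul_pos hs (by exact_mod_cast k.2 i)
        exact Ffun_anti (apoly_pos hk) (apoly_mono hk fun i => (ht i (Set.mem_univ i)).1)

/-- The integral `∫_{F ≤ t_i for all i} F(a_r(t)) dt` is sandwiched by Riemann sums:
`∫_{[s,∞)^r} ≤ ∑_{k ∈ ℕ^r} F(a_r(s k)) s^r ≤ ∫_{[0,∞)^r}`, the full integral converges,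
and the difference between the sum and the full integral is `O_r(s^{1/r})`. -/
theorem stmt18 (r : ℕ) (hr : 1 ≤ r) :
    IntegrableOn (fun t : Fin r → ℝ => Ffun (apoly r t)) {t | ∀ i, 0 ≤ t i} volume ∧
    ∃ C : ℝ, ∀ s : ℝ, 0 < s →
      Summable (sumTerm r s) ∧
      (∫ t in {t : Fin r → ℝ | ∀ i, s ≤ t i}, Ffun (apoly r t)) ≤ ∑' k, sumTerm r s k ∧
      (∑' k, sumTerm r s k) ≤ ∫ t in {t : Fin r → ℝ | ∀ i, 0 ≤ t i}, Ffun (apoly r t) ∧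
      |(∑' k, sumTerm r s k) - ∫ t in {t : Fin r → ℝ | ∀ i, 0 ≤ t i}, Ffun (apoly r t)|
        ≤ C * s ^ ((1 : ℝ) / r) := by
  obtain ⟨n, rfl⟩ : ∃ n, r = n + 1 := ⟨r - 1, by omega⟩
  choose C0 hC0 hB using B_bound n
  have hmeasF : Measurable fun t : Fin (n + 1) → ℝ => Ffun (apoly (n + 1) t) :=
    measurable_Ffun.comp (continuous_apoly _).measurable
  have hQ : ∫⁻ t in {t : Fin (n + 1) → ℝ | ∀ i, 0 ≤ t i}, ENNReal.ofReal (Ffun (apoly (n + 1) t)) =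
      ∫⁻ t in {t : Fin (n + 1) → ℝ | ∀ i, 0 < t i}, ENNReal.ofReal (Ffun (apoly (n + 1) t)) := by
    apply setLIntegral_congr
    have h := Measure.univ_pi_Ioi_ae_eq_Ici (μ := fun _ : Fin (n + 1) => (volume : Measure ℝ)) (f := fun _ => 0)
    have e1 : {t : Fin (n + 1) → ℝ | ∀ i, 0 ≤ t i} = Set.Ici (fun _ => 0) := by
      ext t; simp [Pi.le_def]
    have e2 : {t : Fin (n + 1) → ℝ | ∀ i, 0 < t i} = Set.pi Set.univ fun _ => Set.Ioi 0 := by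
      ext t; simp
    rw [e1, e2]
    exact h.symm
  set A := ∫⁻ t in {t : Fin (n + 1) → ℝ | ∀ i, 0 < t i}, ENNReal.ofReal (Ffun (apoly (n + 1) t))
    with hA
  have hAfin : A < ⊤ := by
    refine (near_far n 1 _).trans_lt (ENNReal.add_lt_top.2 ⟨?_, far_fin _⟩)
    refine ENNReal.sum_lt_top.2 fun i _ => (hB i 1 one_pos le_rfl).trans_lt ENNReal.ofReal_lt_top
  have hint : ∀ S : Set (Fin (n + 1) → ℝ), ∫ t in S, Ffun (apoly (n + 1) t) =
      (∫⁻ t in S, ENNReal.ofReal (Ffun (apoly (n + 1) t))).toReal := fun S =>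
    integral_eq_lintegral_of_nonneg_ae (Filter.Eventually.of_forall fun t => Ffun_nonneg _)
      hmeasF.aestronglyMeasurable
  refine ⟨?_, (∑ i, C0 i) + A.toReal, fun s hs => ?_⟩
  · refine ⟨hmeasF.aestronglyMeasurable, ?_⟩
    rw [hasFiniteIntegral_iff_ofReal (Filter.Eventually.of_forall fun t => Ffun_nonneg _), hQ]
    exact hAfin
  have hup := upper_cubes (n + 1) hs
  have hlo := lower_cubes (n + 1) hs
  rw [← hA] at hup
  set Sg := ∑' k, ENNReal.ofReal (sumTerm (n + 1) s k) with hSg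
  have hSgfin : Sg ≠ ⊤ := (hup.trans_lt hAfin).ne
  have hterm : ∀ k, 0 ≤ sumTerm (n + 1) s k := fun k => mul_nonneg (Ffun_nonneg _) (by positivity)
  have hsum : Summable (sumTerm (n + 1) s) := by
    have := ENNReal.summable_toReal hSgfin
    simpa only [ENNReal.toReal_ofReal (hterm _)] using this
  have htsum : ∑' k, sumTerm (n + 1) s k = Sg.toReal := by
    rw [hSg, ENNReal.tsum_toReal_eq (fun _ => ENNReal.ofReal_ne_top)]
    simp only [ENNReal.toReal_ofReal (hterm _)]
  have hle : Sg.toReal ≤ A.toReal := ENNReal.toReal_mono hAfin.ne hup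
  rw [hint, hint, hQ, htsum]
  refine ⟨hsum, ENNReal.toReal_mono hSgfin hlo, hle, ?_⟩
  rw [abs_sub_comm, abs_of_nonneg (by linarith)]
  have hC : 0 ≤ ∑ i, C0 i := Finset.sum_nonneg fun i _ => hC0 i
  have hA0 : 0 ≤ A.toReal := ENNReal.toReal_nonneg
  have hS0 : 0 ≤ Sg.toReal := ENNReal.toReal_nonneg
  have hpow := Real.rpow_pos_of_pos hs ((1 : ℝ) / (n + 1 : ℕ))
  rcases le_total s 1 with h1 | h1
  · have hmain : A ≤ ENNReal.ofReal ((∑ i, C0 i) * s ^ ((1 : ℝ) / (n + 1 : ℕ))) + Sg := by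
      refine (near_far n s _).trans ?_
      gcongr
      · rw [Finset.sum_mul, ENNReal.ofReal_sum_of_nonneg
          fun i _ => mul_nonneg (hC0 i) hpow.le]
        exact Finset.sum_le_sum fun i _ => hB i s hs h1
      · refine le_trans (lintegral_mono_set ?_) hlo
        intro t ht i
        exact (ht i).le
    have h2 := ENNReal.toReal_mono (ENNReal.add_ne_top.2 ⟨ENNReal.ofReal_ne_top, hSgfin⟩) hmain
    rw [ENNReal.toReal_add ENNReal.ofReal_ne_top hSgfin, ENNReal.toReal_ofReal (by positivity)] at h2
    have := mul_nonneg hA0 hpow.le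
    linarith
  · have h3 : 1 ≤ s ^ ((1 : ℝ) / (n + 1 : ℕ)) := Real.one_le_rpow h1 (by positivity)
    have := mul_nonneg hC hpow.le
    nlinarith
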